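/- Let d ≥ 2 and let 𝒮 be a weighted step set satisfying the standing assumptions, and for 1 ≤ k ≤ d−1 set b_k = Σ_{i∈𝒮, i_k=1} w_i. If the drift is positive, i.e. B(1) > A(1), then there is a constant c > 0 such that for all n ≥ 1, | s_n · S(1)^{−n} · n^{(d−1)/2} − (1 − A(1)/B(1)) · (S(1)/π)^{(d−1)/2} · (b_1 b_2 ⋯ b_{d−1})^{−1/2} | ≤ c/n. Equivalently, s_n = S(1)^n n^{−(d−1)/2} [ (1 − A(1)/B(1)) (S(1)/π)^{(d−1)/2} (b_1 ⋯ b_{d−1})^{−1/2} + O(1/n) ]. -/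

import Mathlib

open Finset

/-- The weighted number of walks of length `n` with steps in `S` (weights `w`),
beginning at the origin and confined to the non-negative orthant. -/
noncomputable def weightedWalkCount (d : ℕ) (S : Finset (Fin d → ℤ))
    (w : (Fin d → ℤ) → ℝ) (n : ℕ) : ℝ :=
  ∑ u : Fin n → S,
    if (∀ k : Fin n, ∀ m : Fin d, 0 ≤ ∑ j ∈ Finset.Iic k, (u j : Fin d → ℤ) m)
    then ∏ k : Fin n, w (u k) else 0

section VSec

/-- Weighted functional of the confined one-dimensional walk with counters. -/
noncomputable def pdV {α ι : Type*} (S : Finset α) (p : α → ℝ) (e : α → ℤ) (y : α → ι → ℕ) :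
    ℕ → ((ι → ℕ) → ℝ) → ℤ → ℝ
  | 0, f, x => if 0 ≤ x then f 0 else 0
  | n + 1, f, x => if 0 ≤ x then
      ∑ i ∈ S, p i * pdV S p e y n (fun N => f (N + y i)) (x + e i) else 0

variable {α ι : Type*} (S : Finset α) (p : α → ℝ) (e : α → ℤ) (y : α → ι → ℕ)

lemma pdV_neg (n : ℕ) (f : (ι → ℕ) → ℝ) (x : ℤ) (hx : x < 0) : pdV S p e y n f x = 0 := by
  cases n <;> simp [pdV, not_le.mpr hx]

lemma pdV_add (n : ℕ) : ∀ (f g : (ι → ℕ) → ℝ) (x : ℤ),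
    pdV S p e y n (fun N => f N + g N) x = pdV S p e y n f x + pdV S p e y n g x := by
  induction n with
  | zero => intro f g x; simp only [pdV]; split_ifs <;> simp
  | succ n ih =>
    intro f g x
    simp only [pdV]
    split_ifs
    · rw [← Finset.sum_add_distrib]
      refine Finset.sum_congr rfl fun i _ => ?_
      rw [ih (fun N => f (N + y i)) (fun N => g (N + y i))]; ring
    · simp

lemma pdV_mul (n : ℕ) : ∀ (c : ℝ) (f : (ι → ℕ) → ℝ) (x : ℤ),
    pdV S p e y n (fun N => c * f N) x = c * pdV S p e y n f x := by
  induction n with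
  | zero => intro c f x; simp only [pdV]; split_ifs <;> simp
  | succ n ih =>
    intro c f x
    simp only [pdV]
    split_ifs
    · rw [Finset.mul_sum]
      refine Finset.sum_congr rfl fun i _ => ?_
      rw [ih c (fun N => f (N + y i))]; ring
    · simp

lemma pdV_zero (n : ℕ) (x : ℤ) : pdV S p e y n (fun _ => 0) x = 0 := by
  have := pdV_mul S p e y n 0 (fun _ => 0) x
  simpa using this

lemma pdV_sum {κ : Type*} (J : Finset κ) (n : ℕ) (f : κ → (ι → ℕ) → ℝ) (x : ℤ) :
    pdV S p e y n (fun N => ∑ j ∈ J, f j N) x = ∑ j ∈ J, pdV S p e y n (f j) x := by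
  classical
  induction J using Finset.induction_on with
  | empty => simpa using pdV_zero S p e y n x
  | insert a s ha ih =>
    simp only [Finset.sum_insert ha]
    rw [pdV_add S p e y n (f a) (fun N => ∑ j ∈ s, f j N), ih]

lemma pdV_mono
    (hp : ∀ i ∈ S, 0 ≤ p i) (hy : ∀ i ∈ S, ∀ j, y i j ≤ 1)
    (n : ℕ) : ∀ (f g : (ι → ℕ) → ℝ) (x : ℤ),
    (∀ N : ι → ℕ, (∀ j, N j ≤ n) → f N ≤ g N) →
    pdV S p e y n f x ≤ pdV S p e y n g x := by
  induction n with
  | zero =>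
    intro f g x h; simp only [pdV]; split_ifs
    · exact h 0 (by simp)
    · exact le_rfl
  | succ n ih =>
    intro f g x h
    simp only [pdV]
    split_ifs
    · refine Finset.sum_le_sum fun i hi => mul_le_mul_of_nonneg_left (ih _ _ _ ?_) (hp i hi)
      intro N hN
      apply h
      intro j
      have := hN j
      have := hy i hi j
      simp only [Pi.add_apply]; omega
    · exact le_rfl

lemma pdV_abs
    (hp : ∀ i ∈ S, 0 ≤ p i) (hy : ∀ i ∈ S, ∀ j, y i j ≤ 1)
    (n : ℕ) (f g : (ι → ℕ) → ℝ) (x : ℤ)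
    (h : ∀ N : ι → ℕ, (∀ j, N j ≤ n) → |f N| ≤ g N) :
    |pdV S p e y n f x| ≤ pdV S p e y n g x := by
  rw [abs_le]
  constructor
  · have h1 := pdV_mono S p e y hp hy n (fun N => (-1) * g N) f x
      (fun N hN => by have := (abs_le.mp (h N hN)).1; linarith)
    rw [pdV_mul] at h1
    linarith
  · exact pdV_mono S p e y hp hy n f g x (fun N hN => (abs_le.mp (h N hN)).2)

lemma pdV_one_nonneg
    (hp : ∀ i ∈ S, 0 ≤ p i) (hy : ∀ i ∈ S, ∀ j, y i j ≤ 1)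
    (hp1 : ∑ i ∈ S, p i = 1)
    (n : ℕ) (f : (ι → ℕ) → ℝ) (x : ℤ)
    (h : ∀ N : ι → ℕ, 0 ≤ f N) : 0 ≤ pdV S p e y n f x := by
  rw [← pdV_zero S p e y n x]
  exact pdV_mono S p e y hp hy n _ _ x (fun N _ => h N)

lemma pdV_pow
    (hp : ∀ i ∈ S, 0 ≤ p i) (hy : ∀ i ∈ S, ∀ j, y i j ≤ 1)
    (hp1 : ∑ i ∈ S, p i = 1)
    (t : ℝ) (ht : 0 ≤ t) (j : ι) (n : ℕ) : ∀ x : ℤ,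
    pdV S p e y n (fun N => t ^ N j) x ≤ (∑ i ∈ S, p i * t ^ y i j) ^ n := by
  induction n with
  | zero => intro x; simp only [pdV]; split_ifs <;> simp
  | succ n ih =>
    intro x
    have hnn : 0 ≤ ∑ i ∈ S, p i * t ^ y i j :=
      Finset.sum_nonneg fun i hi => mul_nonneg (hp i hi) (by positivity)
    simp only [pdV]
    split_ifs
    · rw [pow_succ', Finset.sum_mul]
      refine Finset.sum_le_sum fun i hi => ?_
      have : (fun N : ι → ℕ => t ^ ((N + y i) j)) = fun N => t ^ y i j * t ^ N j := by
        funext N; simp [pow_add, mul_comm]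
      rw [this, pdV_mul, mul_assoc]
      exact mul_le_mul_of_nonneg_left (mul_le_mul_of_nonneg_left (ih _) (by positivity)) (hp i hi)
    · positivity

lemma pdV_sq
    (hp : ∀ i ∈ S, 0 ≤ p i) (hy : ∀ i ∈ S, ∀ j, y i j ≤ 1)
    (hp1 : ∑ i ∈ S, p i = 1)
    (j : ι) (q : ℝ) (hq : q = ∑ i ∈ S, p i * y i j) (n : ℕ) : ∀ (c : ℝ) (x : ℤ),
    pdV S p e y n (fun N => ((N j : ℝ) - c) ^ 2) x ≤ (n * q - c) ^ 2 + n := by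
  induction n with
  | zero => intro c x; simp only [pdV]; split_ifs <;> simp; positivity
  | succ n ih =>
    intro c x
    simp only [pdV]
    split_ifs
    · have h1 : ∀ i ∈ S, p i * pdV S p e y n
          (fun N => (((N + y i) j : ℕ) - c : ℝ) ^ 2) (x + e i) ≤
          p i * ((n * q - c) ^ 2 + n + 1) + p i * y i j * (2 * (n * q - c)) := by
        intro i hi
        have : (fun N : ι → ℕ => (((N + y i) j : ℕ) - c : ℝ) ^ 2) =
            fun N => ((N j : ℝ) - (c - y i j)) ^ 2 := by
          funext N; simp only [Pi.add_apply]; push_cast; ring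
        rw [this, mul_assoc, ← mul_add]
        refine mul_le_mul_of_nonneg_left ((ih _ _).trans ?_) (hp i hi)
        have h0 : (0 : ℝ) ≤ y i j := by positivity
        have h1 : (y i j : ℝ) ≤ 1 := by exact_mod_cast hy i hi j
        nlinarith
      refine (Finset.sum_le_sum h1).trans ?_
      rw [Finset.sum_add_distrib, ← Finset.sum_mul, ← Finset.sum_mul, hp1, ← hq]
      push_cast
      nlinarith [sq_nonneg q]
    · positivity

lemma pdV_one_lower
    (hp : ∀ i ∈ S, 0 ≤ p i) (hy : ∀ i ∈ S, ∀ j, y i j ≤ 1)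
    (hp1 : ∑ i ∈ S, p i = 1)
    (he : ∀ i ∈ S, e i = -1 ∨ e i = 0 ∨ e i = 1)
    (ρ : ℝ) (hρ0 : 0 < ρ) (hρ1 : ρ < 1)
    (hρ : ∑ i ∈ S, p i * ρ ^ (e i) = 1) (n : ℕ) :
    ∀ x : ℤ, -1 ≤ x → 1 - ρ ^ (x + 1) ≤ pdV S p e y n (fun _ => 1) x := by
  induction n with
  | zero =>
    intro x hx
    simp only [pdV]; split_ifs with h
    · have : 0 < ρ ^ (x + 1) := by positivity
      linarith
    · have : x = -1 := by omega
      subst this; simp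
  | succ n ih =>
    intro x hx
    simp only [pdV]; split_ifs with h
    · have h1 : 1 - ρ ^ (x + 1) = ∑ i ∈ S, p i * (1 - ρ ^ (x + e i + 1)) := by
        have : ∀ i ∈ S, p i * (1 - ρ ^ (x + e i + 1)) = p i - ρ ^ (x+1) * (p i * ρ ^ (e i)) := by
          intro i _
          rw [show x + e i + 1 = (x + 1) + e i by ring, zpow_add₀ hρ0.ne']; ring
        rw [Finset.sum_congr rfl this, Finset.sum_sub_distrib, ← Finset.mul_sum, hp1, hρ]; ring
      rw [h1]
      refine Finset.sum_le_sum fun i hi => mul_le_mul_of_nonneg_left (ih _ ?_) (hp i hi)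
      rcases he i hi with h | h | h <;> omega
    · have : x = -1 := by omega
      subst this; simp

lemma pdV_one_upper
    (hp : ∀ i ∈ S, 0 ≤ p i) (hy : ∀ i ∈ S, ∀ j, y i j ≤ 1)
    (hp1 : ∑ i ∈ S, p i = 1)
    (he : ∀ i ∈ S, e i = -1 ∨ e i = 0 ∨ e i = 1)
    (ρ : ℝ) (hρ0 : 0 < ρ) (hρ1 : ρ < 1)
    (hρ : ∑ i ∈ S, p i * ρ ^ (e i) = 1) (θ r : ℝ) (hθ0 : 0 < θ) (hθ : ρ ≤ θ)
    (hr : r = ∑ i ∈ S, p i * θ ^ (e i)) (n : ℕ) :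
    ∀ x : ℤ, -1 ≤ x → pdV S p e y n (fun _ => 1) x ≤ 1 - ρ ^ (x + 1) + r ^ n * θ ^ (x + 1) := by
  have hr0 : 0 ≤ r := by
    rw [hr]; exact Finset.sum_nonneg fun i hi => mul_nonneg (hp i hi) (by positivity)
  induction n with
  | zero =>
    intro x hx
    have h0 : ρ ^ (x + 1) ≤ θ ^ (x + 1) := zpow_le_zpow_left₀ (by omega) hρ0.le hθ
    simp only [pdV]; split_ifs with h
    · simp; linarith
    · have : x = -1 := by omega
      subst this; simp
  | succ n ih =>
    intro x hx
    simp only [pdV]; split_ifs with h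
    · have h1 : 1 - ρ ^ (x + 1) + r ^ (n+1) * θ ^ (x + 1) =
          ∑ i ∈ S, p i * (1 - ρ ^ (x + e i + 1) + r ^ n * θ ^ (x + e i + 1)) := by
        have : ∀ i ∈ S, p i * (1 - ρ ^ (x + e i + 1) + r ^ n * θ ^ (x + e i + 1)) =
            p i - ρ ^ (x+1) * (p i * ρ ^ (e i)) + r ^ n * θ ^ (x+1) * (p i * θ ^ (e i)) := by
          intro i _
          rw [show x + e i + 1 = (x + 1) + e i by ring, zpow_add₀ hρ0.ne', zpow_add₀ hθ0.ne']; ring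
        rw [Finset.sum_congr rfl this, Finset.sum_add_distrib, Finset.sum_sub_distrib,
          ← Finset.mul_sum, ← Finset.mul_sum, hp1, hρ, ← hr]; ring
      rw [h1]
      refine Finset.sum_le_sum fun i hi => mul_le_mul_of_nonneg_left (ih _ ?_) (hp i hi)
      rcases he i hi with h | h | h <;> omega
    · have : x = -1 := by omega
      subst this; simp; positivity

lemma pdV_one_le
    (hp : ∀ i ∈ S, 0 ≤ p i) (hy : ∀ i ∈ S, ∀ j, y i j ≤ 1)
    (hp1 : ∑ i ∈ S, p i = 1)
    (he : ∀ i ∈ S, e i = -1 ∨ e i = 0 ∨ e i = 1)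
    (n : ℕ) : ∀ x : ℤ, pdV S p e y n (fun _ => 1) x ≤ 1 := by
  induction n with
  | zero => intro x; simp only [pdV]; split_ifs <;> simp
  | succ n ih =>
    intro x
    simp only [pdV]; split_ifs
    · calc _ ≤ ∑ i ∈ S, p i * 1 :=
            Finset.sum_le_sum fun i hi => mul_le_mul_of_nonneg_left (ih _) (hp i hi)
        _ = 1 := by simpa using hp1
    · simp

lemma pdV_lin
    (hp : ∀ i ∈ S, 0 ≤ p i) (hy : ∀ i ∈ S, ∀ j, y i j ≤ 1)
    (hp1 : ∑ i ∈ S, p i = 1)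
    (he : ∀ i ∈ S, e i = -1 ∨ e i = 0 ∨ e i = 1)
    (ρ : ℝ) (hρ0 : 0 < ρ) (hρ1 : ρ < 1)
    (hρ : ∑ i ∈ S, p i * ρ ^ (e i) = 1) (θ r : ℝ) (hθ0 : 0 < θ) (hθ : ρ ≤ θ)
    (hr : r = ∑ i ∈ S, p i * θ ^ (e i)) (hr1 : r < 1) (j : ι) (q : ℝ)
    (hq : q = ∑ i ∈ S, p i * y i j) (hq1 : q ≤ 1) (n : ℕ) :
    ∀ x : ℤ, -1 ≤ x →
      |pdV S p e y n (fun N => (N j : ℝ) - n * q) x| ≤ 1 / (1 - r) * θ ^ (x + 1) := by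
  have hq0 : 0 ≤ q := by
    rw [hq]; exact Finset.sum_nonneg fun i hi => mul_nonneg (hp i hi) (by positivity)
  have hr2 : 0 < 1 - r := by linarith
  induction n with
  | zero => intro x hx; simp only [pdV]; split_ifs <;> simp <;> positivity
  | succ n ih =>
    intro x hx
    simp only [pdV]; split_ifs with h
    · have h1 : ∀ i ∈ S, p i * pdV S p e y n
          (fun N => ((N + y i) j : ℕ) - ((n + 1 : ℕ) : ℝ) * q) (x + e i) =
          p i * (pdV S p e y n (fun N => (N j : ℝ) - n * q) (x + e i) +
           (y i j - q) * (pdV S p e y n (fun _ => 1) (x + e i) - 1)) + (p i * y i j - p i * q) := by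
        intro i hi
        have : (fun N : ι → ℕ => (((N + y i) j : ℕ) - ((n + 1 : ℕ) : ℝ) * q : ℝ)) =
            fun N => ((N j : ℝ) - n * q) + (y i j - q) * 1 := by
          funext N; simp only [Pi.add_apply]; push_cast; ring
        rw [this, pdV_add S p e y n (fun N => (N j : ℝ) - n * q) (fun _ => (y i j - q) * 1),
          pdV_mul]
        ring
      rw [Finset.sum_congr rfl h1, Finset.sum_add_distrib, Finset.sum_sub_distrib,
        ← Finset.sum_mul, hp1, ← hq]
      have h2 : ∀ i ∈ S, |p i * (pdV S p e y n (fun N => (N j : ℝ) - n * q) (x + e i) +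
           (y i j - q) * (pdV S p e y n (fun _ => 1) (x + e i) - 1))| ≤
          1 / (1 - r) * θ ^ (x + 1) * (p i * θ ^ (e i)) + ρ ^ (x+1) * (p i * ρ ^ (e i)) := by
        intro i hi
        have hx' : -1 ≤ x + e i := by rcases he i hi with h | h | h <;> omega
        rw [abs_mul, abs_of_nonneg (hp i hi)]
        have a1 := ih (x + e i) hx'
        have a2 := pdV_one_lower S p e y hp hy hp1 he ρ hρ0 hρ1 hρ n (x + e i) hx'
        have a3 := pdV_one_le S p e y hp hy hp1 he n (x + e i)
        have h0 : (0 : ℝ) ≤ y i j := by positivity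
        have h1 : (y i j : ℝ) ≤ 1 := by exact_mod_cast hy i hi j
        have a4 : |(y i j - q) * (pdV S p e y n (fun _ => 1) (x + e i) - 1)| ≤
            ρ ^ (x + e i + 1) := by
          rw [abs_mul]
          have b1 : |(y i j : ℝ) - q| ≤ 1 := by rw [abs_le]; constructor <;> linarith
          have b2 : |pdV S p e y n (fun _ => 1) (x + e i) - 1| ≤ ρ ^ (x + e i + 1) := by
            have : 0 < ρ ^ (x + e i + 1) := by positivity
            rw [abs_le]; constructor <;> linarith
          calc _ ≤ 1 * ρ ^ (x + e i + 1) := by gcongr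
            _ = _ := one_mul _
        rw [show x + e i + 1 = (x + 1) + e i by ring] at a1 a4
        rw [zpow_add₀ hθ0.ne'] at a1
        rw [zpow_add₀ hρ0.ne'] at a4
        calc _ ≤ p i * (1 / (1 - r) * (θ ^ (x + 1) * θ ^ e i) + ρ ^ (x + 1) * ρ ^ e i) :=
              mul_le_mul_of_nonneg_left ((abs_add_le _ _).trans (add_le_add a1 a4)) (hp i hi)
          _ = _ := by ring
      have h3 := (Finset.abs_sum_le_sum_abs _ _).trans (Finset.sum_le_sum h2)
      rw [Finset.sum_add_distrib, ← Finset.mul_sum, ← Finset.mul_sum, hρ, ← hr] at h3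
      have h0 : ρ ^ (x + 1) ≤ θ ^ (x + 1) := zpow_le_zpow_left₀ (by omega) hρ0.le hθ
      have h4 : 1 / (1 - r) * θ ^ (x + 1) * r + θ ^ (x + 1) = 1 / (1 - r) * θ ^ (x + 1) := by
        field_simp; ring
      simp only [one_mul, sub_self, add_zero]
      linarith
    · simp; positivity

end VSec

/-- Probability that the simple walk started at `x` stays nonnegative for `m` steps. -/
noncomputable def pdH : ℕ → ℤ → ℝ
  | 0, x => if 0 ≤ x then 1 else 0
  | m + 1, x => if 0 ≤ x then (pdH m (x + 1) + pdH m (x - 1)) / 2 else 0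

/-- Distribution function of the simple walk. -/
noncomputable def pdC : ℕ → ℤ → ℝ
  | 0, x => if 0 ≤ x then 1 else 0
  | m + 1, x => (pdC m (x + 1) + pdC m (x - 1)) / 2

/-- Point probabilities of the simple walk. -/
noncomputable def pdU : ℕ → ℤ → ℝ
  | 0, x => if x = 0 then 1 else 0
  | m + 1, x => (pdU m (x + 1) + pdU m (x - 1)) / 2

lemma pdH_neg (m : ℕ) (x : ℤ) (hx : x < 0) : pdH m x = 0 := by
  cases m <;> simp [pdH, not_le.mpr hx]

lemma pdH_range (m : ℕ) : ∀ x : ℤ, 0 ≤ pdH m x ∧ pdH m x ≤ 1 := by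
  induction m with
  | zero => intro x; simp only [pdH]; split_ifs <;> norm_num
  | succ m ih =>
    intro x; simp only [pdH]; split_ifs
    · have := ih (x + 1); have := ih (x - 1)
      constructor <;> linarith
    · norm_num

lemma pdH_eq_C (m : ℕ) : ∀ x : ℤ, -1 ≤ x → pdH m x = pdC m (x + 1) - pdC m (-x - 1) := by
  induction m with
  | zero =>
    intro x hx
    simp only [pdH, pdC]
    split_ifs <;> first | omega | simp
  | succ m ih =>
    intro x hx
    rcases eq_or_lt_of_le hx with rfl | h
    · simp [pdH]
    · have h0 : 0 ≤ x := by omega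
      simp only [pdH, pdC, if_pos h0]
      rw [ih (x + 1) (by omega), ih (x - 1) (by omega)]
      have e1 : -(x + 1) - 1 = -x - 1 - 1 := by ring
      have e2 : -(x - 1) - 1 = -x - 1 + 1 := by ring
      have e3 : x - 1 + 1 = x + 1 - 1 := by ring
      rw [e1, e2, e3]; ring

lemma pdC_diff (m : ℕ) : ∀ x : ℤ, pdC m x - pdC m (x - 1) = pdU m x := by
  induction m with
  | zero =>
    intro x
    simp only [pdU, pdC]
    split_ifs <;> first | omega | simp
  | succ m ih =>
    intro x
    simp only [pdU, pdC]
    rw [← ih, ← ih]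
    rw [show x - 1 + 1 = x + 1 - 1 by ring]; ring

lemma pdU_symm (m : ℕ) : ∀ x : ℤ, pdU m (-x) = pdU m x := by
  induction m with
  | zero => intro x; simp [pdU]
  | succ m ih =>
    intro x
    simp only [pdU]
    rw [← ih (x + 1), ← ih (x - 1)]
    rw [show -(x + 1) = -x - 1 by ring, show -(x - 1) = -x + 1 by ring]; ring

lemma pdU_odd (m : ℕ) : ∀ x : ℤ, (x + m) % 2 = 1 → pdU m x = 0 := by
  induction m with
  | zero => intro x hx; simp only [pdU]; rw [if_neg]; rintro rfl; simp at hx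
  | succ m ih =>
    intro x hx
    push_cast at hx
    simp only [pdU]
    rw [ih (x + 1) (by omega), ih (x - 1) (by omega)]; simp

lemma pdU_big (m : ℕ) : ∀ x : ℤ, x < -m → pdU m x = 0 := by
  induction m with
  | zero => intro x hx; simp only [pdU]; rw [if_neg]; rintro rfl; simp at hx
  | succ m ih =>
    intro x hx
    push_cast at hx
    simp only [pdU]
    rw [ih (x + 1) (by omega), ih (x - 1) (by omega)]; simp

lemma pdU_choose (m : ℕ) : ∀ k : ℕ, pdU m (2 * k - m) = (m.choose k : ℝ) / 2 ^ m := by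
  induction m with
  | zero => intro k; cases k <;> simp [pdU]; omega
  | succ m ih =>
    intro k
    simp only [pdU]
    cases k with
    | zero =>
      have h1 := ih 0
      rw [pdU_big m (2 * ((0:ℕ):ℤ) - ((m + 1 : ℕ) : ℤ) - 1) (by push_cast; omega)]
      rw [show (2 * ((0:ℕ):ℤ) - ((m + 1 : ℕ) : ℤ) + 1) = 2 * ((0:ℕ):ℤ) - m by push_cast; ring, h1]
      simp; field_simp; ring
    | succ k =>
      rw [show (2 * ((k+1:ℕ):ℤ) - ((m + 1 : ℕ) : ℤ) + 1) = 2 * ((k+1:ℕ):ℤ) - m by push_cast; ring,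
        show (2 * ((k+1:ℕ):ℤ) - ((m + 1 : ℕ) : ℤ) - 1) = 2 * ((k:ℕ):ℤ) - m by push_cast; ring,
        ih, ih, Nat.choose_succ_succ]
      push_cast; field_simp; ring

lemma pdH_zero_eq (m : ℕ) : pdH m 0 = pdU m 0 + pdU m 1 := by
  rw [pdH_eq_C m 0 (by norm_num), ← pdC_diff, ← pdC_diff]; norm_num

lemma pdU_wallis (k : ℕ) : pdU (2 * k) 0 ^ 2 * ((2 * k + 1) * Real.Wallis.W k) = 1 := by
  have h := pdU_choose (2 * k) k
  rw [show (2 * (k:ℤ) - ((2 * k : ℕ) : ℤ)) = 0 by push_cast; ring] at h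
  rw [h, Real.Wallis.W_eq_factorial_ratio]
  have h2 : (((2 * k).choose k : ℕ) : ℝ) = ((2 * k).factorial : ℝ) / (k.factorial * k.factorial) := by
    rw [Nat.cast_choose ℝ (by omega : k ≤ 2 * k)]
    congr 3; congr 1; omega
  rw [h2]
  have : (k.factorial : ℝ) ≠ 0 := by positivity
  have : ((2*k).factorial : ℝ) ≠ 0 := by positivity
  have : (2 * (k:ℝ) + 1) ≠ 0 := by positivity
  field_simp
  rw [← pow_mul]; congr 1; ring

lemma pdH_even (k : ℕ) : pdH (2 * k) 0 = pdU (2 * k) 0 := by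
  rw [pdH_zero_eq, pdU_odd _ 1 (by push_cast; omega), add_zero]

lemma pdH_odd (k : ℕ) : pdH (2 * k + 1) 0 = pdU (2 * (k + 1)) 0 := by
  rw [pdH_zero_eq, pdU_odd _ 0 (by push_cast; omega), zero_add]
  rw [show 2 * (k + 1) = (2 * k + 1) + 1 by ring]
  conv_rhs => rw [pdU]
  rw [zero_add, zero_sub, pdU_symm]; ring

lemma pdU_sq_bounds (k : ℕ) : 2 / Real.pi / (2 * k + 1) ≤ pdU (2 * k) 0 ^ 2 ∧
    pdU (2 * k) 0 ^ 2 ≤ 2 / Real.pi * ((2 * k + 2) / (2 * k + 1) ^ 2) := by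
  have h := pdU_wallis k
  have h1 := Real.Wallis.W_le k
  have h2 := Real.Wallis.le_W k
  have h3 := Real.Wallis.W_pos k
  have hpi := Real.pi_pos
  have hk : (0:ℝ) < 2 * k + 1 := by positivity
  have e : pdU (2 * k) 0 ^ 2 = 1 / ((2 * k + 1) * Real.Wallis.W k) := by
    field_simp; linarith
  rw [e]
  constructor
  · calc _ = 1 / ((2 * k + 1) * (Real.pi / 2)) := by field_simp
      _ ≤ _ := by gcongr
  · calc _ ≤ 1 / ((2 * k + 1) * (((2 : ℝ) * k + 1) / (2 * k + 2) * (Real.pi / 2))) := by gcongr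
      _ = _ := by field_simp

lemma pdH_sq (m : ℕ) (hm : 1 ≤ m) : |m * pdH m 0 ^ 2 - 2 / Real.pi| ≤ 2 / Real.pi * (2 / m) := by
  have hpi := Real.pi_pos
  have hc : 0 < 2 / Real.pi := by positivity
  rcases Nat.even_or_odd' m with ⟨k, rfl | rfl⟩
  · rw [pdH_even]
    obtain ⟨h1, h2⟩ := pdU_sq_bounds k
    have hk : (1:ℝ) ≤ k := by exact_mod_cast (by omega : 1 ≤ k)
    generalize 2 / Real.pi = c at *
    generalize pdU (2 * k) 0 ^ 2 = v at *
    push_cast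
    rw [abs_le]
    constructor
    · have : -(c * (2 / (2 * k))) + c ≤ 2 * k * (c / (2 * k + 1)) := by
        have : 2 * k * (c / (2 * k + 1)) - (-(c * (2 / (2 * k))) + c) = c * (k + 1) / (k * (2 * k + 1)) := by
          field_simp; ring
        have : 0 ≤ c * (k + 1) / (k * (2 * k + 1)) := by positivity
        linarith
      nlinarith
    · have : 2 * k * (c * ((2 * k + 2) / (2 * k + 1) ^ 2)) ≤ c := by
        have : c - 2 * k * (c * ((2 * k + 2) / (2 * k + 1) ^ 2)) = c / (2 * k + 1) ^ 2 := by
          field_simp; ring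
        have : 0 ≤ c / (2 * k + 1 : ℝ) ^ 2 := by positivity
        linarith
      have : 0 ≤ c * (2 / (2 * k)) := by positivity
      nlinarith
  · rw [pdH_odd]
    obtain ⟨h1, h2⟩ := pdU_sq_bounds (k + 1)
    have hk : (0:ℝ) ≤ k := by positivity
    generalize 2 / Real.pi = c at *
    generalize pdU (2 * (k + 1)) 0 ^ 2 = v at *
    push_cast at *
    rw [abs_le]
    constructor
    · have : -(c * (2 / (2 * k + 1))) + c ≤ (2 * k + 1) * (c / (2 * (k + 1) + 1)) := by
        have : (2 * k + 1) * (c / (2 * (k + 1) + 1)) - (-(c * (2 / (2 * k + 1))) + c) =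
            4 * c / ((2 * k + 1) * (2 * k + 3)) := by
          field_simp; ring
        have : 0 ≤ 4 * c / ((2 * k + 1) * (2 * k + 3)) := by positivity
        linarith
      nlinarith
    · have : (2 * k + 1) * (c * ((2 * (k + 1) + 2) / (2 * (k + 1) + 1) ^ 2)) ≤ c := by
        have : c - (2 * k + 1) * (c * ((2 * (k + 1) + 2) / (2 * (k + 1) + 1) ^ 2)) =
            c * (2 * k + 5) / (2 * k + 3) ^ 2 := by
          field_simp; ring
        have : 0 ≤ c * (2 * k + 5) / (2 * k + 3 : ℝ) ^ 2 := by positivity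
        linarith
      have : 0 ≤ c * (2 / (2 * k + 1)) := by positivity
      nlinarith

/-- normalised: `√(π/2) √m g(m) = 1 + O(1/m)` -/
lemma pdH_asymp (m : ℕ) (hm : 1 ≤ m) :
    |√(Real.pi / 2) * √m * pdH m 0 - 1| ≤ 2 / m := by
  have hpi := Real.pi_pos
  have h := pdH_sq m hm
  have hm' : (1:ℝ) ≤ m := by exact_mod_cast hm
  set t := √(Real.pi / 2) * √m * pdH m 0 with ht
  have t0 : 0 ≤ t := by have := (pdH_range m 0).1; positivity
  have t2 : t ^ 2 = Real.pi / 2 * (m * pdH m 0 ^ 2) := by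
    rw [ht, mul_pow, mul_pow, Real.sq_sqrt (by positivity), Real.sq_sqrt (by positivity)]; ring
  have h1 : |t ^ 2 - 1| ≤ 2 / (m : ℝ) := by
    have : t ^ 2 - 1 = Real.pi / 2 * (m * pdH m 0 ^ 2 - 2 / Real.pi) := by
      rw [t2]; field_simp
    rw [this, abs_mul, abs_of_pos (by positivity)]
    calc _ ≤ Real.pi / 2 * (2 / Real.pi * (2 / m)) := by gcongr
      _ = _ := by field_simp
  have h2 : |t ^ 2 - 1| = |t - 1| * (t + 1) := by
    rw [show t ^ 2 - 1 = (t - 1) * (t + 1) by ring, abs_mul, abs_of_nonneg (by linarith : 0 ≤ t + 1)]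
  have := abs_nonneg (t - 1)
  nlinarith

/-- single-coordinate expansion -/
lemma pd_single (q : ℝ) (hq0 : 0 < q) (n N : ℕ) (hn : 1 ≤ n)
    (hN : n * q / 2 ≤ N) :
    |√n * pdH N 0 * √(Real.pi * q / 2) - 1 - (-((N / (n * q) - 1) / 2))| ≤
      2 * (N / (n * q) - 1) ^ 2 + 8 / (n * q) := by
  have hn' : (1:ℝ) ≤ n := by exact_mod_cast hn
  have hnq : 0 < n * q := by positivity
  have hN0 : (0:ℝ) < N := by linarith
  have hN1 : 1 ≤ N := by exact_mod_cast hN0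
  have hA := pdH_asymp N hN1
  set X := (N:ℝ) / (n * q) with hX
  have hXh : 1 / 2 ≤ X := by rw [hX, div_le_div_iff₀ (by norm_num) hnq]; linarith
  set s := √X with hs
  have hs2 : s ^ 2 = X := Real.sq_sqrt (by linarith)
  have hs0 : 1 / 2 ≤ s := by apply Real.le_sqrt_of_sq_le; linarith
  have hNX : (N:ℝ) = n * q * s ^ 2 := by rw [hs2, hX]; field_simp
  set t := √(Real.pi / 2) * √N * pdH N 0 with ht
  have h1 : √n * pdH N 0 * √(Real.pi * q / 2) = t / s := by
    rw [ht, hNX, Real.sqrt_mul (by positivity), Real.sqrt_mul (by positivity), Real.sqrt_sq (by linarith),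
      show Real.pi * q / 2 = Real.pi / 2 * q by ring, Real.sqrt_mul (by positivity)]
    field_simp
  rw [h1]
  have h2 : t / s - 1 - -((X - 1) / 2) = (t - 1) / s + (s - 1) ^ 2 * ((s + 2) / (2 * s)) := by
    rw [← hs2]; field_simp; ring
  rw [h2]
  refine (abs_add_le _ _).trans ?_
  have h3 : |(t - 1) / s| ≤ 8 / (n * q) := by
    rw [abs_div, abs_of_pos (by linarith : 0 < s), div_le_iff₀ (by linarith)]
    have : (2:ℝ) / N ≤ 4 / (n * q) := by
      rw [div_le_div_iff₀ hN0 hnq]; linarith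
    have h5 : 0 < 8 / (n * q) := by positivity
    have h6 : 4 / (n * q) = 8 / (n * q) * (1 / 2) := by ring
    nlinarith
  have h4 : |(s - 1) ^ 2 * ((s + 2) / (2 * s))| ≤ 2 * (X - 1) ^ 2 := by
    rw [abs_of_nonneg (by positivity), ← hs2, show 2 * (s ^ 2 - 1) ^ 2 = (s - 1) ^ 2 * (2 * (s + 1) ^ 2) by ring]
    apply mul_le_mul_of_nonneg_left _ (sq_nonneg _)
    rw [div_le_iff₀ (by linarith)]
    nlinarith [sq_nonneg s, mul_nonneg (by linarith : (0:ℝ) ≤ s - 1/2) (sq_nonneg (s + 1))]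
  linarith

/-- product expansion -/
lemma pd_prod {ι : Type*} (J : Finset ι) (K : ℝ) (hK : 1 ≤ K) : ∃ C : ℝ, 0 ≤ C ∧
    ∀ (z l : ι → ℝ) (ε : ℝ),
      (∀ j ∈ J, |z j| ≤ K ∧ |l j| ≤ K ∧ l j ^ 2 ≤ ε ∧ |z j - 1 - l j| ≤ ε) →
      0 ≤ ε → |∏ j ∈ J, z j - 1 - ∑ j ∈ J, l j| ≤ C * ε := by
  classical
  induction J using Finset.induction_on with
  | empty => exact ⟨0, le_rfl, by simp⟩
  | insert a s ha ih =>
    obtain ⟨C, hC, h⟩ := ih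
    refine ⟨K * C + 1 + s.card * (K + 1), by positivity, ?_⟩
    intro z l ε hz hε
    have h1 := h z l ε (fun j hj => hz j (Finset.mem_insert_of_mem hj)) hε
    obtain ⟨a1, -, a2, a3⟩ := hz a (Finset.mem_insert_self _ _)
    rw [Finset.prod_insert ha, Finset.sum_insert ha]
    have e : z a * ∏ j ∈ s, z j - 1 - (l a + ∑ j ∈ s, l j) =
      z a * (∏ j ∈ s, z j - 1 - ∑ j ∈ s, l j) + (z a - 1 - l a) +
        ∑ j ∈ s, ((z a - 1 - l a) * l j + l a * l j) := by
      rw [Finset.sum_add_distrib, ← Finset.mul_sum, ← Finset.mul_sum]; ring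
    have h2 : |∑ j ∈ s, ((z a - 1 - l a) * l j + l a * l j)| ≤ s.card * (K + 1) * ε := by
      refine (Finset.abs_sum_le_sum_abs _ _).trans ?_
      rw [mul_assoc, ← nsmul_eq_mul]
      refine Finset.sum_le_card_nsmul _ _ _ fun j hj => ?_
      obtain ⟨-, b1, b2, -⟩ := hz j (Finset.mem_insert_of_mem hj)
      have c1 : |(z a - 1 - l a) * l j| ≤ ε * K := by rw [abs_mul]; gcongr
      have c2 : |l a * l j| ≤ ε := by
        rw [abs_le]; constructor <;> nlinarith [sq_nonneg (l a - l j), sq_nonneg (l a + l j)]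
      have := abs_add_le ((z a - 1 - l a) * l j) (l a * l j)
      linarith
    have h3 : |z a * (∏ j ∈ s, z j - 1 - ∑ j ∈ s, l j)| ≤ K * (C * ε) := by rw [abs_mul]; gcongr
    rw [e]
    have := abs_add_three (z a * (∏ j ∈ s, z j - 1 - ∑ j ∈ s, l j)) (z a - 1 - l a)
      (∑ j ∈ s, ((z a - 1 - l a) * l j + l a * l j))
    linarith

section WalkSec

/-- Recursive count of confined walks started at `x`. -/
noncomputable def pdW {d : ℕ} (S : Finset (Fin d → ℤ)) (p : (Fin d → ℤ) → ℝ) :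
    ℕ → (Fin d → ℤ) → ℝ
  | 0, _ => 1
  | n + 1, x => ∑ i ∈ S, if (∀ m, 0 ≤ x m + i m) then p i * pdW S p n (x + i) else 0

lemma pdW_eq {d : ℕ} (S : Finset (Fin d → ℤ)) (p : (Fin d → ℤ) → ℝ) (n : ℕ) :
    ∀ x : Fin d → ℤ, pdW S p n x = ∑ u : Fin n → S,
    if (∀ k : Fin n, ∀ m : Fin d, 0 ≤ x m + ∑ j ∈ Finset.Iic k, (u j : Fin d → ℤ) m)
    then ∏ k : Fin n, p (u k) else 0 := by
  induction n with
  | zero => intro x; simp [pdW]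
  | succ n ih =>
    intro x
    rw [← (Fin.consEquiv (fun _ : Fin (n+1) => (S : Type _))).sum_comp, Fintype.sum_prod_type]
    simp only [pdW]
    rw [← Finset.sum_coe_sort S]
    refine Finset.sum_congr rfl fun i _ => ?_
    have key : ∀ u : Fin n → S, (∀ k : Fin (n+1), ∀ m : Fin d, 0 ≤ x m +
        ∑ j ∈ Finset.Iic k, ((Fin.cons i u : Fin (n+1) → S) j : Fin d → ℤ) m) ↔
        (∀ m, 0 ≤ x m + (i : Fin d → ℤ) m) ∧ (∀ k : Fin n, ∀ m : Fin d, 0 ≤ (x + i) m +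
          ∑ j ∈ Finset.Iic k, (u j : Fin d → ℤ) m) := by
      intro u
      rw [Fin.forall_fin_succ]
      have h0 : Finset.Iic (0 : Fin (n+1)) = {0} := by
        ext a; simp
      have h1 : ∀ k : Fin n, ∀ m, ∑ j ∈ Finset.Iic k.succ,
          ((Fin.cons i u : Fin (n+1) → S) j : Fin d → ℤ) m =
          (i : Fin d → ℤ) m + ∑ j ∈ Finset.Iic k, (u j : Fin d → ℤ) m := by
        intro k m
        have : Finset.Iic k.succ = insert 0 ((Finset.Iic k).map (Fin.succEmb n)) := by
          ext a
          refine Fin.cases ?_ (fun b => ?_) a <;> simp [Fin.succ_ne_zero]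
        rw [this, Finset.sum_insert (by simp [Fin.succ_ne_zero]), Finset.sum_map]
        simp
      simp only [h0, h1, Finset.sum_singleton, Fin.cons_zero, Pi.add_apply, add_assoc]
    simp only [Fin.consEquiv, Equiv.coe_fn_mk]
    simp_rw [key, Fin.prod_univ_succ, Fin.cons_zero, Fin.cons_succ]
    by_cases hc : ∀ m, 0 ≤ x m + (i : Fin d → ℤ) m
    · rw [if_pos hc, ih, Finset.mul_sum]
      refine Finset.sum_congr rfl fun u _ => ?_
      simp only [hc, implies_true, true_and]
      split_ifs <;> simp
    · simp [hc]

lemma pd_flip {d : ℕ} (S : Finset (Fin d → ℤ)) (p : (Fin d → ℤ) → ℝ) (j : Fin d)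
    (hsym : ∀ i ∈ S, Function.update i j (-(i j)) ∈ S ∧ p (Function.update i j (-(i j))) = p i)
    (F : (Fin d → ℤ) → ℝ) :
    ∑ i ∈ S, p i * F i = ∑ i ∈ S, p i * F (Function.update i j (-(i j))) := by
  refine Finset.sum_nbij' (fun i => Function.update i j (-(i j)))
    (fun i => Function.update i j (-(i j))) (fun i hi => (hsym i hi).1) (fun i hi => (hsym i hi).1)
    ?_ ?_ ?_
  · intro i _; simp
  · intro i _; simp
  · intro i hi; rw [(hsym i hi).2]; simp

lemma pd_flip_eq {d : ℕ} (S : Finset (Fin d → ℤ)) (p : (Fin d → ℤ) → ℝ) (j : Fin d)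
    (hsym : ∀ i ∈ S, Function.update i j (-(i j)) ∈ S ∧ p (Function.update i j (-(i j))) = p i)
    (F G : (Fin d → ℤ) → ℝ)
    (h : ∀ i ∈ S, F i + F (Function.update i j (-(i j))) = G i + G (Function.update i j (-(i j)))) :
    ∑ i ∈ S, p i * F i = ∑ i ∈ S, p i * G i := by
  have h1 := pd_flip S p j hsym F
  have h2 := pd_flip S p j hsym G
  have h3 : ∑ i ∈ S, p i * F i + ∑ i ∈ S, p i * F (Function.update i j (-(i j))) =
    ∑ i ∈ S, p i * G i + ∑ i ∈ S, p i * G (Function.update i j (-(i j))) := by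
    rw [← Finset.sum_add_distrib, ← Finset.sum_add_distrib]
    refine Finset.sum_congr rfl fun i hi => ?_
    rw [← mul_add, ← mul_add, h i hi]
  linarith

lemma pdH_step (m : ℕ) (x a : ℤ) (hx : 0 ≤ x) (ha : a = -1 ∨ a = 0 ∨ a = 1) :
    pdH m (x + a) + pdH m (x - a) = 2 * pdH (m + a.natAbs) x := by
  rcases ha with rfl | rfl | rfl
  · simp only [Int.natAbs_neg, Int.natAbs_one, pdH, if_pos hx]
    rw [show x - -1 = x + 1 by ring, show x + -1 = x - 1 by ring]; ring
  · simp; ring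
  · simp only [Int.natAbs_one, pdH, if_pos hx]; ring

lemma pd_symmetrize {d : ℕ} (S : Finset (Fin d → ℤ)) (p : (Fin d → ℤ) → ℝ)
    (hS : ∀ i ∈ S, ∀ m, i m = -1 ∨ i m = 0 ∨ i m = 1)
    (ℓ : Fin d) (n : ℕ) (x : Fin d → ℤ) (J : Finset (Fin d)) (hℓ : ℓ ∉ J)
    (hx : ∀ j ∈ J, 0 ≤ x j)
    (hsym : ∀ j ∈ J, ∀ i ∈ S,
      Function.update i j (-(i j)) ∈ S ∧ p (Function.update i j (-(i j))) = p i) :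
    ∀ f : (Fin d → ℤ) → (Fin d → ℕ) → ℝ,
    (∀ j ∈ J, ∀ i N, f (Function.update i j (-(i j))) N = f i N) →
    ∑ i ∈ S, p i * pdV S p (fun i => i ℓ) (fun i j => (i j).natAbs) n
      (fun N => f i N * ∏ j ∈ J, pdH (N j) (x j + i j)) (x ℓ + i ℓ) =
    ∑ i ∈ S, p i * pdV S p (fun i => i ℓ) (fun i j => (i j).natAbs) n
      (fun N => f i N * ∏ j ∈ J, pdH (N j + (i j).natAbs) (x j)) (x ℓ + i ℓ) := by
  classical
  induction J using Finset.induction_on with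
  | empty => intro f _; simp
  | insert a s ha ih =>
    intro f hf
    simp only [Finset.mem_insert, not_or, forall_eq_or_imp] at hℓ hx hsym hf
    have hfp : ∀ (j : Fin d) (i : Fin d → ℤ) (k : Fin d), k ≠ j →
        Function.update i j (-(i j)) k = i k := by
      intro j i k hk; simp [hk]
    have step1 : ∑ i ∈ S, p i * pdV S p (fun i => i ℓ) (fun i j => (i j).natAbs) n
        (fun N => f i N * ∏ j ∈ insert a s, pdH (N j) (x j + i j)) (x ℓ + i ℓ) =
      ∑ i ∈ S, p i * pdV S p (fun i => i ℓ) (fun i j => (i j).natAbs) n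
        (fun N => (f i N * pdH (N a + (i a).natAbs) (x a)) * ∏ j ∈ s, pdH (N j) (x j + i j))
        (x ℓ + i ℓ) := by
      refine pd_flip_eq S p a hsym.1 _ _ fun i hi => ?_
      rw [hfp a i ℓ hℓ.1]
      rw [← pdV_add, ← pdV_add]
      congr 1
      funext N
      rw [Finset.prod_insert ha, Finset.prod_insert ha, hf.1]
      have e1 : ∏ j ∈ s, pdH (N j) (x j + Function.update i a (-(i a)) j) =
          ∏ j ∈ s, pdH (N j) (x j + i j) :=
        Finset.prod_congr rfl fun j hj => by rw [hfp a i j (by rintro rfl; exact ha hj)]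
      rw [e1]
      simp only [Function.update_self, Int.natAbs_neg]
      have := pdH_step (N a) (x a) (i a) hx.1 (hS i hi a)
      rw [sub_eq_add_neg] at this
      linear_combination (f i N * ∏ j ∈ s, pdH (N j) (x j + i j)) * this
    rw [step1, ih hℓ.2 hx.2 hsym.2 (fun i N => f i N * pdH (N a + (i a).natAbs) (x a))]
    · refine Finset.sum_congr rfl fun i hi => ?_
      congr 2
      funext N
      rw [Finset.prod_insert ha]; ring
    · intro j hj i N
      rw [hf.2 j hj, hfp j i a (by rintro rfl; exact ha hj)]

lemma pdW_eq_V {d : ℕ} (S : Finset (Fin d → ℤ)) (p : (Fin d → ℤ) → ℝ)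
    (hS : ∀ i ∈ S, ∀ m, i m = -1 ∨ i m = 0 ∨ i m = 1)
    (ℓ : Fin d) (J : Finset (Fin d)) (hℓ : ℓ ∉ J) (hJ : ∀ j, j ≠ ℓ → j ∈ J)
    (hsym : ∀ j ∈ J, ∀ i ∈ S,
      Function.update i j (-(i j)) ∈ S ∧ p (Function.update i j (-(i j))) = p i) (n : ℕ) :
    ∀ x : Fin d → ℤ, (∀ m, 0 ≤ x m) → pdW S p n x =
      pdV S p (fun i => i ℓ) (fun i j => (i j).natAbs) n
        (fun N => ∏ j ∈ J, pdH (N j) (x j)) (x ℓ) := by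
  induction n with
  | zero =>
    intro x hx
    simp only [pdW, pdV, if_pos (hx ℓ), Pi.zero_apply]
    rw [Finset.prod_eq_one]
    intro j _; simp [pdH, hx j]
  | succ n ih =>
    intro x hx
    have h1 := pd_symmetrize S p hS ℓ n x J hℓ (fun j _ => hx j) hsym (fun _ _ => 1) (by simp)
    simp only [one_mul] at h1
    simp only [pdV, if_pos (hx ℓ), Pi.add_apply]
    rw [← h1]
    simp only [pdW]
    refine Finset.sum_congr rfl fun i hi => ?_
    split_ifs with hc
    · rw [ih (x + i) hc]; simp
    · push Not at hc
      obtain ⟨m, hm⟩ := hc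
      by_cases hml : m = ℓ
      · subst hml
        rw [pdV_neg _ _ _ _ _ _ _ hm, mul_zero]
      · have : (fun N : Fin d → ℕ => ∏ j ∈ J, pdH (N j) (x j + i j)) = fun _ => 0 := by
          funext N
          exact Finset.prod_eq_zero (hJ m hml) (pdH_neg _ _ hm)
        rw [this, pdV_zero, mul_zero]

end WalkSec

section AsympSec

lemma pd_geom (D : ℕ) (s : ℝ) (hs0 : 0 ≤ s) (hs1 : s < 1) :
    ∃ C : ℝ, 0 ≤ C ∧ ∀ n : ℕ, 1 ≤ n → (n : ℝ) ^ D * s ^ n ≤ C / n := by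
  have h := tendsto_pow_const_mul_const_pow_of_abs_lt_one (D + 1) (r := s)
    (by rw [abs_of_nonneg hs0]; exact hs1)
  obtain ⟨C, hC⟩ := h.bddAbove_range
  refine ⟨C, ?_, fun n hn => ?_⟩
  · have := hC ⟨0, rfl⟩; simpa using this
  · have := hC ⟨n, rfl⟩
    have hn' : (1:ℝ) ≤ n := by exact_mod_cast hn
    rw [le_div_iff₀ (by linarith)]
    simp only at this
    calc _ = (n:ℝ) ^ (D + 1) * s ^ n := by ring
      _ ≤ C := this

set_option maxHeartbeats 1000000 in
lemma pd_pointwise {ι : Type*} (J : Finset ι) (q : ι → ℝ) (hq0 : ∀ j ∈ J, 0 < q j)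
    (hq1 : ∀ j ∈ J, q j ≤ 1) : ∃ C : ℝ, 0 ≤ C ∧ ∀ (n : ℕ) (N : ι → ℕ), 1 ≤ n → (∀ j, N j ≤ n) →
    |∏ j ∈ J, (√n * pdH (N j) 0 * √(Real.pi * q j / 2)) - 1
      - ∑ j ∈ J, (-((N j / (n * q j) - 1) / 2))| ≤
    C * (∑ j ∈ J, (N j / (n * q j) - 1) ^ 2 + 1 / n) +
      C * ((n : ℝ) ^ J.card * ∑ j ∈ J, ((2 : ℝ) ^ (q j / 2)) ^ n * (1 / 2) ^ N j) := by
  classical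
  set Q : ℝ := ∑ j ∈ J, 1 / q j + 1 with hQ
  have hQj : ∀ j ∈ J, 1 / q j ≤ Q := by
    intro j hj
    have := Finset.single_le_sum (f := fun j => 1 / q j)
      (fun i hi => by have := hq0 i hi; positivity) hj
    linarith
  have hQ1 : 1 ≤ Q := by
    have : 0 ≤ ∑ j ∈ J, 1 / q j := Finset.sum_nonneg fun i hi => by have := hq0 i hi; positivity
    linarith
  obtain ⟨C1, hC1, h1⟩ := pd_prod J (1 + Q + 2 * Q ^ 2 + 8 * Q) (by nlinarith)
  set C2 : ℝ := 2 ^ J.card + 1 + J.card * Q with hC2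
  have hC2' : 0 ≤ C2 := by positivity
  refine ⟨C1 * (8 * Q) + C2, by positivity, fun n N hn hN => ?_⟩
  have hn' : (1:ℝ) ≤ n := by exact_mod_cast hn
  have hX0 : ∀ j ∈ J, 0 ≤ (N j : ℝ) / (n * q j) := fun j hj => by have := hq0 j hj; positivity
  have hXQ : ∀ j ∈ J, (N j : ℝ) / (n * q j) ≤ Q := by
    intro j hj
    have := hq0 j hj
    refine le_trans ?_ (hQj j hj)
    have : (N j : ℝ) ≤ n := by exact_mod_cast hN j
    rw [div_le_div_iff₀ (by positivity) (by positivity)]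
    nlinarith
  have hXab : ∀ j ∈ J, |(N j : ℝ) / (n * q j) - 1| ≤ Q := by
    intro j hj
    have := hX0 j hj; have := hXQ j hj
    rw [abs_le]; constructor <;> linarith
  set E1 : ℝ := ∑ j ∈ J, ((N j : ℝ) / (n * q j) - 1) ^ 2 + 1 / (n : ℝ) with hE1
  set E2 : ℝ := (n : ℝ) ^ J.card * ∑ j ∈ J, ((2 : ℝ) ^ (q j / 2)) ^ n * (1 / 2) ^ N j with hE2
  have hE1p : 0 ≤ E1 := by positivity
  have hE2p : 0 ≤ E2 := by positivity
  by_cases hg : ∀ j ∈ J, n * q j / 2 ≤ N j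
  · have h2 := h1 (fun j => √n * pdH (N j) 0 * √(Real.pi * q j / 2))
      (fun j => -((N j / (n * q j) - 1) / 2)) (8 * Q * E1) ?_ (by positivity)
    · have e1 : 0 ≤ C2 * E1 := by positivity
      have e2 : 0 ≤ (C1 * (8 * Q) + C2) * E2 := by positivity
      nlinarith
    · intro j hj
      have hs := pd_single (q j) (hq0 j hj) n (N j) hn (hg j hj)
      have hab := hXab j hj
      have hqj := hq0 j hj
      have hsq : ((N j : ℝ) / (n * q j) - 1) ^ 2 ≤ E1 - 1 / n := by
        have := Finset.single_le_sum (f := fun j => ((N j : ℝ) / (n * q j) - 1) ^ 2)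
          (fun i hi => sq_nonneg _) hj
        linarith
      have hinv : (0:ℝ) < 1 / n := by positivity
      have hinv1 : 1 / (n:ℝ) ≤ 1 := by rw [div_le_one (by linarith)]; exact hn'
      have h8 : 8 / (n * q j) ≤ 8 * Q * (1 / n) := by
        have : 8 / (n * q j) = 8 * (1 / q j) * (1 / n) := by field_simp
        rw [this]
        have := hQj j hj
        gcongr
      set T := (N j : ℝ) / (n * q j) - 1
      have hTQ : T ^ 2 ≤ Q ^ 2 := by rw [← sq_abs]; gcongr
      have hlab : |-(T / 2)| ≤ Q := by
        rw [abs_neg, abs_div, abs_of_pos (by norm_num : (0:ℝ) < 2)]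
        have := abs_nonneg T
        linarith
      have herr : 2 * T ^ 2 + 8 / (n * q j) ≤ 8 * Q * E1 := by
        nlinarith [mul_nonneg (by linarith : (0:ℝ) ≤ 8 * Q - 2) (sq_nonneg T), mul_le_mul_of_nonneg_left hsq (by linarith : 0 ≤ 8 * Q)]
      refine ⟨?_, ?_, ?_, hs.trans herr⟩
      · have a1 : 8 / (n * q j) ≤ 8 * Q := by nlinarith
        have a2 := abs_le.mp hs
        have a3 := abs_le.mp hlab
        rw [abs_le]; constructor <;> linarith
      · nlinarith
      · have : 0 ≤ 8 / (n * q j) := by positivity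
        nlinarith [sq_nonneg T]
  · push Not at hg
    obtain ⟨j0, hj0, hlt⟩ := hg
    have hnp : (1:ℝ) ≤ (n:ℝ) ^ J.card := one_le_pow₀ hn'
    have hbad : (1:ℝ) ≤ ∑ j ∈ J, ((2 : ℝ) ^ (q j / 2)) ^ n * (1 / 2) ^ N j := by
      refine le_trans ?_ (Finset.single_le_sum
        (f := fun j => ((2 : ℝ) ^ (q j / 2)) ^ n * (1 / 2) ^ N j) (fun i _ => by positivity) hj0)
      rw [← Real.rpow_natCast, ← Real.rpow_mul (by norm_num), one_div, inv_pow, ← div_eq_mul_inv,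
        one_le_div (by positivity), ← Real.rpow_natCast]
      exact Real.rpow_le_rpow_of_exponent_le (by norm_num) (by linarith)
    have hprod : |∏ j ∈ J, (√n * pdH (N j) 0 * √(Real.pi * q j / 2))| ≤
        2 ^ J.card * (n:ℝ) ^ J.card := by
      rw [Finset.abs_prod, ← mul_pow, ← Finset.prod_const]
      refine Finset.prod_le_prod (fun _ _ => abs_nonneg _) fun j hj => ?_
      have b1 := pdH_range (N j) 0
      have b2 : √(n:ℝ) ≤ n := by rw [Real.sqrt_le_left (by linarith)]; nlinarith
      have b3 : √(Real.pi * q j / 2) ≤ 2 := by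
        rw [Real.sqrt_le_left (by norm_num)]
        have := Real.pi_le_four
        have := Real.pi_pos
        have := hq1 j hj
        nlinarith
      have b4 : 0 ≤ √(n:ℝ) := Real.sqrt_nonneg _
      have b5 : 0 ≤ √(Real.pi * q j / 2) := Real.sqrt_nonneg _
      rw [abs_of_nonneg (by have := b1.1; positivity)]
      calc _ ≤ (n:ℝ) * 1 * 2 := by have := b1.1; have := b1.2; gcongr
        _ = _ := by ring
    have hsum : |∑ j ∈ J, (-(((N j : ℝ) / (n * q j) - 1) / 2))| ≤ J.card * Q := by
      refine (Finset.abs_sum_le_sum_abs _ _).trans ?_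
      rw [← nsmul_eq_mul]
      refine Finset.sum_le_card_nsmul _ _ _ fun j hj => ?_
      rw [abs_neg, abs_div, abs_of_pos (by norm_num : (0:ℝ) < 2)]
      have := hXab j hj
      linarith
    have hE2' : (n:ℝ) ^ J.card ≤ E2 := by rw [hE2]; nlinarith
    have e1 : 0 ≤ (C1 * (8 * Q) + C2) * E1 := by positivity
    have e2 : 0 ≤ C1 * (8 * Q) * E2 := by positivity
    have e3 : C2 * (n:ℝ) ^ J.card ≤ C2 * E2 := by gcongr
    have e4 : (1 + J.card * Q) ≤ (1 + J.card * Q) * (n:ℝ) ^ J.card := by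
      exact le_mul_of_one_le_right (by positivity) hnp
    have e5 : C2 * (n:ℝ) ^ J.card = 2 ^ J.card * (n:ℝ) ^ J.card + (1 + J.card * Q) * (n:ℝ) ^ J.card := by
      rw [hC2]; ring
    have := abs_le.mp hprod
    have := abs_le.mp hsum
    rw [abs_le]
    constructor <;> linarith

lemma pd_rate (q : ℝ) (hq0 : 0 < q) (hq1 : q ≤ 1) :
    0 ≤ (2:ℝ) ^ (q / 2) * (1 - q / 2) ∧ (2:ℝ) ^ (q / 2) * (1 - q / 2) < 1 := by
  have h0 : 0 < 1 - q / 2 := by linarith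
  have h2 : (0:ℝ) < 2 ^ (q / 2) := by positivity
  refine ⟨by positivity, ?_⟩
  have h1 : (2:ℝ) ^ (q / 2) < Real.exp (q / 2) := by
    rw [Real.rpow_def_of_pos (by norm_num)]
    apply Real.exp_lt_exp.mpr
    have := Real.log_two_lt_d9
    nlinarith
  have h3 : 1 - q / 2 ≤ Real.exp (-(q / 2)) := by
    have := Real.add_one_le_exp (-(q / 2)); linarith
  calc _ < Real.exp (q / 2) * (1 - q / 2) := by gcongr
    _ ≤ Real.exp (q / 2) * Real.exp (-(q / 2)) := by gcongr
    _ = 1 := by rw [← Real.exp_add]; simp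

theorem pd_core {α ι : Type*} (S : Finset α) (p : α → ℝ) (e : α → ℤ) (y : α → ι → ℕ)
    (hp : ∀ i ∈ S, 0 ≤ p i) (hy : ∀ i ∈ S, ∀ j, y i j ≤ 1) (hp1 : ∑ i ∈ S, p i = 1)
    (he : ∀ i ∈ S, e i = -1 ∨ e i = 0 ∨ e i = 1)
    (ρ : ℝ) (hρ0 : 0 < ρ) (hρ1 : ρ < 1)
    (hρ : ∑ i ∈ S, p i * ρ ^ (e i) = 1) (θ r : ℝ) (hθ0 : 0 < θ) (hθ : ρ ≤ θ)
    (hr : r = ∑ i ∈ S, p i * θ ^ (e i)) (hr1 : r < 1)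
    (J : Finset ι) (q : ι → ℝ) (hq : ∀ j ∈ J, q j = ∑ i ∈ S, p i * y i j)
    (hq0 : ∀ j ∈ J, 0 < q j) :
    ∃ C : ℝ, 0 ≤ C ∧ ∀ n : ℕ, 1 ≤ n →
      |pdV S p e y n (fun N => ∏ j ∈ J, (√n * pdH (N j) 0 * √(Real.pi * q j / 2))) 0 - (1 - ρ)|
        ≤ C / n := by
  classical
  have hq1 : ∀ j ∈ J, q j ≤ 1 := by
    intro j hj
    rw [hq j hj, ← hp1]
    refine Finset.sum_le_sum fun i hi => ?_
    have h1 : (y i j : ℝ) ≤ 1 := by exact_mod_cast hy i hi j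
    have := hp i hi
    nlinarith
  have hr0 : 0 ≤ r := by
    rw [hr]; exact Finset.sum_nonneg fun i hi => mul_nonneg (hp i hi) (by positivity)
  obtain ⟨C, hC, hpt⟩ := pd_pointwise J q hq0 hq1
  obtain ⟨G0, hG0, hG⟩ := pd_geom 0 r hr0 hr1
  have hR : ∀ j : ι, ∃ R : ℝ, 0 ≤ R ∧ (j ∈ J → ∀ n : ℕ, 1 ≤ n →
      (n:ℝ) ^ J.card * ((2:ℝ) ^ (q j / 2) * (1 - q j / 2)) ^ n ≤ R / n) := by
    intro j
    by_cases hj : j ∈ J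
    · obtain ⟨h1, h2⟩ := pd_rate (q j) (hq0 j hj) (hq1 j hj)
      obtain ⟨R, hR0, hR⟩ := pd_geom J.card _ h1 h2
      exact ⟨R, hR0, fun _ => hR⟩
    · exact ⟨0, le_rfl, fun h => absurd h hj⟩
  choose R hR0 hR using hR
  refine ⟨C * (∑ j ∈ J, 1 / q j ^ 2 + 1) + C * ∑ j ∈ J, R j +
    ∑ j ∈ J, 1 / (2 * q j) * (1 / (1 - r) * θ) + G0 * θ, ?_, fun n hn => ?_⟩
  · have a1 : 0 ≤ ∑ j ∈ J, R j := Finset.sum_nonneg fun j _ => hR0 j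
    have a2 : 0 ≤ ∑ j ∈ J, 1 / (2 * q j) * (1 / (1 - r) * θ) :=
      Finset.sum_nonneg fun j hj => by
        have := hq0 j hj
        have : 0 < 1 - r := by linarith
        positivity
    positivity
  have hn' : (1:ℝ) ≤ n := by exact_mod_cast hn
  set V := fun f : (ι → ℕ) → ℝ => pdV S p e y n f 0 with hV
  set F := fun N : ι → ℕ => ∏ j ∈ J, (√n * pdH (N j) 0 * √(Real.pi * q j / 2)) with hF
  -- the error after removing the affine part
  have key1 : |V F - V (fun _ => 1) - ∑ j ∈ J, V (fun N => -((N j / (n * q j) - 1) / 2))| ≤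
      V (fun N => C * (∑ j ∈ J, (N j / (n * q j) - 1) ^ 2 + 1 / n) +
      C * ((n : ℝ) ^ J.card * ∑ j ∈ J, ((2 : ℝ) ^ (q j / 2)) ^ n * (1 / 2) ^ N j)) := by
    have h := pdV_abs S p e y hp hy n _ _ 0 (fun N hN => hpt n N hn hN)
    refine le_trans (le_of_eq ?_) h
    congr 1
    have e1 : (fun N : ι → ℕ => ∏ j ∈ J, (√n * pdH (N j) 0 * √(Real.pi * q j / 2)) - 1
      - ∑ j ∈ J, (-((N j / (n * q j) - 1) / 2))) = fun N => (F N + (-1) * 1) +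
        (-1) * ∑ j ∈ J, (-((N j / (n * q j) - 1) / 2)) := by
      funext N; rw [hF]; ring
    rw [e1, pdV_add S p e y n (fun N => F N + (-1) * 1), pdV_add S p e y n F, pdV_mul, pdV_mul, pdV_sum]
    simp only [hV]; ring
  have key2 : V (fun N => C * (∑ j ∈ J, (N j / (n * q j) - 1) ^ 2 + 1 / n) +
      C * ((n : ℝ) ^ J.card * ∑ j ∈ J, ((2 : ℝ) ^ (q j / 2)) ^ n * (1 / 2) ^ N j)) ≤
      (C * (∑ j ∈ J, 1 / q j ^ 2 + 1) + C * ∑ j ∈ J, R j) / n := by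
    have e1 : V (fun N => C * (∑ j ∈ J, (N j / (n * q j) - 1) ^ 2 + 1 / n) +
      C * ((n : ℝ) ^ J.card * ∑ j ∈ J, ((2 : ℝ) ^ (q j / 2)) ^ n * (1 / 2) ^ N j)) =
      C * (∑ j ∈ J, V (fun N => (N j / (n * q j) - 1) ^ 2) + V (fun _ => (1 / n) * 1)) +
      C * ((n : ℝ) ^ J.card * ∑ j ∈ J, ((2 : ℝ) ^ (q j / 2)) ^ n * V (fun N => (1 / 2) ^ N j)) := by
      simp only [hV]
      rw [pdV_add S p e y n (fun N => C * (∑ j ∈ J, (N j / (n * q j) - 1) ^ 2 + 1 / n)),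
        pdV_mul, pdV_add S p e y n (fun N => ∑ j ∈ J, (N j / (n * q j) - 1) ^ 2), pdV_sum,
        pdV_mul, pdV_mul, pdV_sum]
      simp only [pdV_mul, mul_one]
    rw [e1]
    have b1 : V (fun _ => (1 / n) * 1) ≤ 1 / n := by
      simp only [hV]
      rw [pdV_mul]
      have := pdV_one_le S p e y hp hy hp1 he n 0
      have h0 : (0:ℝ) < 1 / n := by positivity
      nlinarith
    have b2 : ∀ j ∈ J, V (fun N => (N j / (n * q j) - 1) ^ 2) ≤ 1 / q j ^ 2 / n := by
      intro j hj
      have hqj := hq0 j hj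
      have : (fun N : ι → ℕ => ((N j : ℝ) / (n * q j) - 1) ^ 2) =
          fun N => (1 / (n * q j) ^ 2) * ((N j : ℝ) - n * q j) ^ 2 := by
        funext N; field_simp
      simp only [hV]
      rw [this, pdV_mul]
      have h := pdV_sq S p e y hp hy hp1 j (q j) (hq j hj) n (n * q j) 0
      calc _ ≤ 1 / (n * q j) ^ 2 * ((n * q j - n * q j) ^ 2 + n) := by gcongr
        _ = _ := by field_simp; ring
    have b3 : ∀ j ∈ J, (n : ℝ) ^ J.card * (((2 : ℝ) ^ (q j / 2)) ^ n * V (fun N => (1 / 2) ^ N j))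
        ≤ R j / n := by
      intro j hj
      refine le_trans ?_ (hR j hj n hn)
      rw [mul_pow]
      have h := pdV_pow S p e y hp hy hp1 (1 / 2) (by norm_num) j n 0
      have h2 : ∑ i ∈ S, p i * (1 / 2 : ℝ) ^ y i j = 1 - q j / 2 := by
        rw [hq j hj]
        conv_rhs => rw [← hp1, Finset.sum_div, ← Finset.sum_sub_distrib]
        refine Finset.sum_congr rfl fun i hi => ?_
        have := hy i hi j
        interval_cases h : y i j <;> norm_num <;> ring
      rw [h2] at h
      simp only [hV]
      gcongr
    have b4 : (n : ℝ) ^ J.card * ∑ j ∈ J, ((2 : ℝ) ^ (q j / 2)) ^ n * V (fun N => (1 / 2) ^ N j) ≤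
        (∑ j ∈ J, R j) / n := by
      rw [Finset.mul_sum, Finset.sum_div]
      exact Finset.sum_le_sum b3
    have b5 : ∑ j ∈ J, V (fun N => (N j / (n * q j) - 1) ^ 2) ≤ (∑ j ∈ J, 1 / q j ^ 2) / n := by
      rw [Finset.sum_div]; exact Finset.sum_le_sum b2
    calc _ ≤ C * ((∑ j ∈ J, 1 / q j ^ 2) / n + 1 / n) + C * ((∑ j ∈ J, R j) / n) := by gcongr
      _ = _ := by ring
  have key3 : |∑ j ∈ J, V (fun N => -((N j / (n * q j) - 1) / 2))| ≤
      (∑ j ∈ J, 1 / (2 * q j) * (1 / (1 - r) * θ)) / n := by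
    rw [Finset.sum_div]
    refine (Finset.abs_sum_le_sum_abs _ _).trans (Finset.sum_le_sum fun j hj => ?_)
    have hqj := hq0 j hj
    have : (fun N : ι → ℕ => -(((N j : ℝ) / (n * q j) - 1) / 2)) =
        fun N => (-(1 / (2 * (n * q j)))) * ((N j : ℝ) - n * q j) := by
      funext N; field_simp
    simp only [hV]
    rw [this, pdV_mul, abs_mul, abs_neg, abs_of_pos (by positivity)]
    have h := pdV_lin S p e y hp hy hp1 he ρ hρ0 hρ1 hρ θ r hθ0 hθ hr hr1 j (q j) (hq j hj)
      (hq1 j hj) n 0 (by norm_num)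
    rw [zero_add, zpow_one] at h
    calc _ ≤ 1 / (2 * (n * q j)) * (1 / (1 - r) * θ) := by gcongr
      _ = _ := by field_simp
  have key4 : |V (fun _ => 1) - (1 - ρ)| ≤ G0 * θ / n := by
    have h1 := pdV_one_lower S p e y hp hy hp1 he ρ hρ0 hρ1 hρ n 0 (by norm_num)
    have h2 := pdV_one_upper S p e y hp hy hp1 he ρ hρ0 hρ1 hρ θ r hθ0 hθ hr n 0 (by norm_num)
    rw [zero_add, zpow_one] at h1 h2
    rw [zpow_one] at h2
    have h3 := hG n hn
    rw [pow_zero, one_mul] at h3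
    have h4 : r ^ n * θ ≤ G0 / n * θ := by gcongr
    have h5 : G0 / n * θ = G0 * θ / n := by ring
    have h6 : 0 ≤ r ^ n * θ := by positivity
    simp only [hV]
    rw [abs_le]; constructor <;> linarith
  have k1 := abs_le.mp (key1.trans key2)
  have k3 := abs_le.mp key3
  have k4 := abs_le.mp key4
  rw [add_div, add_div, abs_le]
  change _ ≤ V F - (1 - ρ) ∧ V F - (1 - ρ) ≤ _
  constructor <;> linarith

end AsympSec

section FinalSec

lemma pd_split {α : Type*} (S : Finset α) (w : α → ℝ) (e : α → ℤ)
    (he : ∀ i ∈ S, e i = -1 ∨ e i = 0 ∨ e i = 1) (t : ℝ) :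
    ∑ i ∈ S, w i * t ^ (e i) = (∑ i ∈ S.filter (fun i => e i = -1), w i) * t⁻¹ +
      (∑ i ∈ S, w i - ∑ i ∈ S.filter (fun i => e i = -1), w i
        - ∑ i ∈ S.filter (fun i => e i = 1), w i) +
      (∑ i ∈ S.filter (fun i => e i = 1), w i) * t := by
  rw [Finset.sum_filter, Finset.sum_filter, Finset.sum_mul, Finset.sum_mul,
    ← Finset.sum_sub_distrib, ← Finset.sum_sub_distrib, ← Finset.sum_add_distrib,
    ← Finset.sum_add_distrib]
  refine Finset.sum_congr rfl fun i hi => ?_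
  rcases he i hi with h | h | h <;> simp [h]

lemma pd_count_norm (d : ℕ) (S : Finset (Fin d → ℤ)) (w : (Fin d → ℤ) → ℝ) (s : ℝ) (n : ℕ) :
    weightedWalkCount d S w n * s ^ (-(n : ℤ)) = pdW S (fun i => w i / s) n 0 := by
  rw [pdW_eq, weightedWalkCount, Finset.sum_mul]
  refine Finset.sum_congr rfl fun u _ => ?_
  simp only [Pi.zero_apply, zero_add]
  split_ifs
  · rw [Finset.prod_div_distrib]
    simp [div_eq_mul_inv]
  · simp

lemma pd_natAbs {d : ℕ} (S : Finset (Fin d → ℤ)) (w : (Fin d → ℤ) → ℝ)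
    (hS : ∀ i ∈ S, ∀ m, i m = -1 ∨ i m = 0 ∨ i m = 1) (j : Fin d)
    (hsym : ∀ i ∈ S, Function.update i j (-(i j)) ∈ S ∧ w (Function.update i j (-(i j))) = w i) :
    ∑ i ∈ S, w i * ((i j).natAbs : ℕ) = 2 * ∑ i ∈ S.filter (fun i => i j = 1), w i := by
  have h1 := pd_flip S w j hsym (fun i => if i j = 1 then 1 else 0)
  have h2 : ∑ i ∈ S.filter (fun i => i j = 1), w i =
      ∑ i ∈ S, w i * (if i j = 1 then 1 else 0) := by
    rw [Finset.sum_filter]; refine Finset.sum_congr rfl fun i _ => ?_; split_ifs <;> simp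
  rw [two_mul]
  nth_rewrite 2 [h2]
  rw [h1, h2, ← Finset.sum_add_distrib]
  refine Finset.sum_congr rfl fun i hi => ?_
  rcases hS i hi j with h | h | h <;> simp [h]

lemma pd_const {ι : Type*} (J : Finset ι) (b : ι → ℝ) (hb : ∀ j ∈ J, 0 < b j) (s : ℝ) (hs : 0 < s) :
    (s / Real.pi) ^ ((J.card : ℝ) / 2) * (∏ j ∈ J, b j) ^ (-(1:ℝ) / 2) =
      ∏ j ∈ J, (√(Real.pi * (2 * b j / s) / 2))⁻¹ := by
  have hpi := Real.pi_pos
  rw [← Real.finset_prod_rpow J b (fun j hj => (hb j hj).le),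
    show (J.card : ℝ) / 2 = (1/2) * J.card by ring, Real.rpow_mul (by positivity),
    Real.rpow_natCast, ← Real.sqrt_eq_rpow, ← Finset.prod_const, ← Finset.prod_mul_distrib]
  refine Finset.prod_congr rfl fun j hj => ?_
  have h := hb j hj
  rw [show (-(1:ℝ) / 2) = -(1/2) by ring, Real.rpow_neg h.le, ← Real.sqrt_eq_rpow,
    ← Real.sqrt_inv, ← Real.sqrt_inv, ← Real.sqrt_mul (by positivity)]
  congr 1
  field_simp

end FinalSec

theorem positive_drift_asymptotics
    (d : ℕ) (hd : 2 ≤ d)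
    (S : Finset (Fin d → ℤ)) (w : (Fin d → ℤ) → ℝ)
    -- steps lie in {-1,0,1}^d \ {0}
    (hSsmall : ∀ i ∈ S, (∀ m : Fin d, i m = -1 ∨ i m = 0 ∨ i m = 1) ∧ i ≠ 0)
    -- nonnegative weights
    (hw : ∀ i ∈ S, 0 ≤ w i)
    -- symmetry of the weighting over each of the first d-1 axes
    (hsym : ∀ j : Fin d, (j : ℕ) < d - 1 → ∀ i ∈ S,
      Function.update i j (-(i j)) ∈ S ∧ w (Function.update i j (-(i j))) = w i)
    -- a positively weighted step forwards and backwards in each coordinate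
    (hfb : ∀ j : Fin d, (∃ i ∈ S, i j = 1 ∧ 0 < w i) ∧ (∃ i ∈ S, i j = -1 ∧ 0 < w i))
    (A1 B1 S1 : ℝ)
    (hA1 : A1 = ∑ i ∈ S.filter (fun i => i ⟨d - 1, by omega⟩ = -1), w i)
    (hB1 : B1 = ∑ i ∈ S.filter (fun i => i ⟨d - 1, by omega⟩ = 1), w i)
    (hS1 : S1 = ∑ i ∈ S, w i)
    -- positive drift
    (hdrift : A1 < B1) :
    ∃ c : ℝ, 0 < c ∧ ∀ n : ℕ, 1 ≤ n →
      |weightedWalkCount d S w n * S1 ^ (-(n : ℤ)) * (n : ℝ) ^ (((d : ℝ) - 1) / 2)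
        - (1 - A1 / B1) * (S1 / Real.pi) ^ (((d : ℝ) - 1) / 2)
            * (∏ j ∈ Finset.univ.filter (fun j : Fin d => (j : ℕ) < d - 1),
                ∑ i ∈ S.filter (fun i => i j = 1), w i) ^ (-(1 : ℝ) / 2)|
      ≤ c / n := by
  classical
  have hpi := Real.pi_pos
  set ℓ : Fin d := ⟨d - 1, by omega⟩ with hℓ
  set J : Finset (Fin d) := Finset.univ.filter (fun j : Fin d => (j : ℕ) < d - 1) with hJ
  set b : Fin d → ℝ := fun j => ∑ i ∈ S.filter (fun i => i j = 1), w i with hb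
  have hSs : ∀ i ∈ S, ∀ m, i m = -1 ∨ i m = 0 ∨ i m = 1 := fun i hi => (hSsmall i hi).1
  have hfpos : ∀ (j : Fin d) (c : ℤ), (∃ i ∈ S, i j = c ∧ 0 < w i) →
      0 < ∑ i ∈ S.filter (fun i => i j = c), w i := by
    rintro j c ⟨i, hi, hij, hwi⟩
    exact Finset.sum_pos' (fun k hk => hw k (Finset.mem_filter.mp hk).1)
      ⟨i, Finset.mem_filter.mpr ⟨hi, hij⟩, hwi⟩
  have hA0 : 0 < A1 := by rw [hA1]; exact hfpos ℓ (-1) (hfb ℓ).2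
  have hB0 : 0 < B1 := hA0.trans hdrift
  have hb0 : ∀ j ∈ J, 0 < b j := fun j _ => hfpos j 1 (hfb j).1
  have hS0 : 0 < S1 := by
    obtain ⟨i, hi, -, hwi⟩ := (hfb ℓ).1
    rw [hS1]; exact Finset.sum_pos' hw ⟨i, hi, hwi⟩
  have hℓJ : ℓ ∉ J := by simp [hJ, hℓ]
  have hJℓ : ∀ j, j ≠ ℓ → j ∈ J := by
    intro j hj
    simp only [hJ, Finset.mem_filter, Finset.mem_univ, true_and]
    have h1 : (j : ℕ) ≠ d - 1 := fun h => hj (Fin.ext h)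
    have := j.2
    omega
  have hcard : J.card = d - 1 := by
    have : J = Finset.univ.erase ℓ := by
      ext j
      simp only [Finset.mem_erase, Finset.mem_univ, and_true]
      exact ⟨fun h => by rintro rfl; exact hℓJ h, hJℓ j⟩
    rw [this, Finset.card_erase_of_mem (Finset.mem_univ _)]; simp
  have hcardR : ((d : ℝ) - 1) / 2 = (J.card : ℝ) / 2 := by
    rw [hcard, Nat.cast_sub (by omega)]; simp
  set p : (Fin d → ℤ) → ℝ := fun i => w i / S1 with hp
  have hp0 : ∀ i ∈ S, 0 ≤ p i := fun i hi => div_nonneg (hw i hi) hS0.le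
  have hp1 : ∑ i ∈ S, p i = 1 := by
    simp only [hp]; rw [← Finset.sum_div, ← hS1, div_self hS0.ne']
  have hsymw : ∀ j ∈ J, ∀ i ∈ S,
      Function.update i j (-(i j)) ∈ S ∧ w (Function.update i j (-(i j))) = w i :=
    fun j hj i hi => hsym j (by simpa [hJ] using hj) i hi
  have hsymp : ∀ j ∈ J, ∀ i ∈ S,
      Function.update i j (-(i j)) ∈ S ∧ p (Function.update i j (-(i j))) = p i :=
    fun j hj i hi => ⟨(hsymw j hj i hi).1, by simp only [hp]; rw [(hsymw j hj i hi).2]⟩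
  have hsplit : ∀ t : ℝ, ∑ i ∈ S, p i * t ^ (i ℓ) =
      (A1 * t⁻¹ + (S1 - A1 - B1) + B1 * t) / S1 := by
    intro t
    have h := pd_split S w (fun i => i ℓ) (fun i hi => hSs i hi ℓ) t
    rw [hA1, hB1, hS1, ← h, ← hS1, Finset.sum_div]
    refine Finset.sum_congr rfl fun i _ => ?_
    simp only [hp]; ring
  have hρ0 : 0 < A1 / B1 := by positivity
  have hρ1 : A1 / B1 < 1 := by rw [div_lt_one hB0]; exact hdrift
  set θ := √(A1 / B1) with hθ
  have hθ0 : 0 < θ := Real.sqrt_pos.mpr hρ0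
  have hθ2 : θ ^ 2 = A1 / B1 := Real.sq_sqrt hρ0.le
  have hθ1 : θ < 1 := by rw [hθ, Real.sqrt_lt' one_pos]; simpa using hρ1
  have hAθ : A1 = B1 * θ ^ 2 := by rw [hθ2]; field_simp
  have hr1 : ∑ i ∈ S, p i * θ ^ (i ℓ) < 1 := by
    rw [hsplit, div_lt_one hS0]
    have : A1 * θ⁻¹ = B1 * θ := by rw [hAθ]; field_simp
    rw [this]
    have : 0 < B1 * (1 - θ) ^ 2 := by
      have : 0 < 1 - θ := by linarith
      positivity
    nlinarith
  obtain ⟨C, hC0, hC⟩ := pd_core S p (fun i => i ℓ) (fun i j => (i j).natAbs) hp0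
    (fun i hi j => by rcases hSs i hi j with h | h | h <;> simp [h]) hp1
    (fun i hi => hSs i hi ℓ) (A1 / B1) hρ0 hρ1
    (by rw [hsplit]; field_simp; ring) θ _ hθ0 (by nlinarith) rfl hr1 J (fun j => 2 * b j / S1)
    (fun j hj => by
      have := pd_natAbs S w hSs j (hsymw j hj)
      simp only [hb]
      rw [← this, Finset.sum_div]
      refine Finset.sum_congr rfl fun i _ => ?_
      simp only [hp]; ring)
    (fun j hj => by have := hb0 j hj; positivity)
  set Γ := ∏ j ∈ J, (√(Real.pi * (2 * b j / S1) / 2))⁻¹ with hΓ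
  have hΓ0 : 0 ≤ Γ := Finset.prod_nonneg fun j _ => by positivity
  refine ⟨Γ * C + 1, by positivity, fun n hn => ?_⟩
  have hn' : (1:ℝ) ≤ n := by exact_mod_cast hn
  rw [hcardR, mul_assoc (1 - A1 / B1), pd_const J b hb0 S1 hS0, ← hΓ, pd_count_norm,
    pdW_eq_V S p hSs ℓ J hℓJ hJℓ hsymp n 0 (by simp)]
  have hmain : pdV S p (fun i => i ℓ) (fun i j => (i j).natAbs) n
        (fun N => ∏ j ∈ J, pdH (N j) ((0 : Fin d → ℤ) j)) ((0 : Fin d → ℤ) ℓ) *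
        (n:ℝ) ^ ((J.card : ℝ) / 2) =
      Γ * pdV S p (fun i => i ℓ) (fun i j => (i j).natAbs) n (fun N => ∏ j ∈ J,
        (√n * pdH (N j) 0 * √(Real.pi * (2 * b j / S1) / 2))) 0 := by
    rw [mul_comm, ← pdV_mul, ← pdV_mul]
    simp only [Pi.zero_apply]
    congr 1
    funext N
    rw [show (J.card : ℝ) / 2 = (1/2) * J.card by ring, Real.rpow_mul (by positivity),
      Real.rpow_natCast, ← Real.sqrt_eq_rpow, ← Finset.prod_const, hΓ,
      ← Finset.prod_mul_distrib, ← Finset.prod_mul_distrib]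
    refine Finset.prod_congr rfl fun j hj => ?_
    have : 0 < √(Real.pi * (2 * b j / S1) / 2) := by
      have := hb0 j hj
      apply Real.sqrt_pos.mpr; positivity
    generalize √(Real.pi * (2 * b j / S1) / 2) = t at this
    field_simp
  rw [hmain, mul_comm (1 - A1 / B1), ← mul_sub, abs_mul, abs_of_nonneg hΓ0]
  calc _ ≤ Γ * (C / n) := by gcongr; exact hC n hn
    _ ≤ (Γ * C + 1) / n := by
      rw [← mul_div_assoc]; gcongr; linarith
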